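/- (Simulation of Werner states) For all unit vectors a, b ∈ S², (1/(4π)²) ∫_{S²} ∫_{S²} sgn(a·(λ₀ + λ₁)) sgn(b·λ₀) dσ(λ₀) dσ(λ₁) = (a·b)/2. Consequently, the local hidden variable model in which Alice outputs A = -sgn(a·(λ₀+λ₁)) and Bob outputs B = sgn(b·λ₀), with λ₀, λ₁ independent uniform on S², has joint expectation E(AB) = -(a·b)/2, equal to that of the Werner state W = (1/2)|ψ⁻⟩⟨ψ⁻| + (1/2)·𝟙/4. -/

import Mathlib

open MeasureTheory Metric
open scoped RealInnerProductSpace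

/-- The unit sphere in ℝ³. -/
noncomputable abbrev Sphere2 := Metric.sphere (0 : EuclideanSpace ℝ (Fin 3)) 1

/-- The surface measure `σ` on the unit sphere of ℝ³ (total mass `4π`). -/
noncomputable def sphereMeasure : Measure Sphere2 :=
  (volume : Measure (EuclideanSpace ℝ (Fin 3))).toSphere

/-- `sgn(x) = 1` if `x ≥ 0`, `-1` if `x < 0`. -/
noncomputable def sgn (x : ℝ) : ℝ := if 0 ≤ x then 1 else -1
/-- The part of the open unit ball of `ℝ × ℝ²` whose points make with the first axis an angle of
cosine at least `t`. -/
def sphericalSector (t : ℝ) : Set (ℝ × EuclideanSpace ℝ (Fin 2)) :=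
  {p | 0 < p.1 ∧ p.1 ^ 2 + ‖p.2‖ ^ 2 < 1 ∧ t ^ 2 * (p.1 ^ 2 + ‖p.2‖ ^ 2) ≤ p.1 ^ 2}

lemma measurableSet_sphericalSector (t : ℝ) : MeasurableSet (sphericalSector t) := by
  simp only [sphericalSector, Set.ofPred_and]
  exact (measurableSet_lt measurable_const (by fun_prop)).inter
    ((measurableSet_lt (by fun_prop) measurable_const).inter
      (measurableSet_le (by fun_prop) (by fun_prop)))

open Set in
/-- The volume of a spherical sector of the unit ball of `ℝ × ℝ²`, by slicing along its axis. -/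
lemma volume_sphericalSector {t : ℝ} (ht₀ : 0 < t) (ht₁ : t < 1) :
    volume (sphericalSector t) =
      ENNReal.ofReal (2 * Real.pi / 3 * (1 - t)) := by
  set k : ℝ := (1 - t ^ 2) / t ^ 2 with hk
  have hk₀ : 0 ≤ k := div_nonneg (by nlinarith) (by positivity)
  have hkt : t ^ 2 * k = 1 - t ^ 2 := by rw [hk]; field_simp
  set g : ℝ → ℝ := fun z => if z ≤ t then Real.pi * (k * z ^ 2) else Real.pi * (1 - z ^ 2) with hg
  have hslice : ∀ z : ℝ, volume (Prod.mk z ⁻¹' sphericalSector t) =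
      (Ioc (0 : ℝ) 1).indicator (fun z => ENNReal.ofReal (g z)) z := by
    intro z
    by_cases hz : z ∈ Ioc (0 : ℝ) 1
    · obtain ⟨hz₀, hz₁⟩ := hz
      rw [indicator_of_mem (show z ∈ Ioc (0 : ℝ) 1 from ⟨hz₀, hz₁⟩)]
      by_cases hzt : z ≤ t
      · have hset : (Prod.mk z ⁻¹' sphericalSector t)
            =ᵐ[volume] closedBall (0 : EuclideanSpace ℝ (Fin 2)) (Real.sqrt (k * z ^ 2)) := by
          have hsub : ∀ w : EuclideanSpace ℝ (Fin 2),
              t ^ 2 * (z ^ 2 + ‖w‖ ^ 2) ≤ z ^ 2 ↔ ‖w‖ ^ 2 ≤ k * z ^ 2 := by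
            intro w
            have : t ^ 2 * (k * z ^ 2) = z ^ 2 - t ^ 2 * z ^ 2 := by
              rw [← mul_assoc, hkt]; ring
            rw [← mul_le_mul_iff_right₀ (show 0 < t ^ 2 by positivity) (b := ‖w‖ ^ 2), this]
            constructor <;> intro h <;> linarith
          have hsphere : ∀ᵐ w : EuclideanSpace ℝ (Fin 2),
              w ∉ sphere (0 : EuclideanSpace ℝ (Fin 2)) (Real.sqrt (k * z ^ 2)) :=
            measure_eq_zero_iff_ae_notMem.1 (Measure.addHaar_sphere _ _ _)
          filter_upwards [hsphere] with w hw
          apply propext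
          change (0 < z ∧ z ^ 2 + ‖w‖ ^ 2 < 1 ∧ t ^ 2 * (z ^ 2 + ‖w‖ ^ 2) ≤ z ^ 2) ↔
            w ∈ closedBall (0 : EuclideanSpace ℝ (Fin 2)) (Real.sqrt (k * z ^ 2))
          rw [mem_sphere_zero_iff_norm] at hw
          rw [mem_closedBall_zero_iff, hsub, Real.le_sqrt (norm_nonneg _) (by positivity)]
          refine ⟨fun h => h.2.2, fun h => ⟨hz₀, ?_, h⟩⟩
          have hlt : ‖w‖ ^ 2 < k * z ^ 2 := by
            refine lt_of_le_of_ne h fun heq => hw ?_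
            rw [← heq, Real.sqrt_sq (norm_nonneg _)]
          have : k * z ^ 2 ≤ k * t ^ 2 := by gcongr
          nlinarith
        rw [measure_congr hset, EuclideanSpace.volume_closedBall_fin_two,
          ← ENNReal.ofReal_pow (Real.sqrt_nonneg _), Real.sq_sqrt (by positivity),
          ← ENNReal.ofReal_mul (by positivity)]
        simp [hg, hzt, mul_comm]
      · have hz2 : 0 ≤ 1 - z ^ 2 := by nlinarith
        have hset : (Prod.mk z ⁻¹' sphericalSector t) =
            ball (0 : EuclideanSpace ℝ (Fin 2)) (Real.sqrt (1 - z ^ 2)) := by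
          ext w
          rw [mem_ball_zero_iff, Real.lt_sqrt (norm_nonneg _)]
          change (0 < z ∧ z ^ 2 + ‖w‖ ^ 2 < 1 ∧ t ^ 2 * (z ^ 2 + ‖w‖ ^ 2) ≤ z ^ 2) ↔ _
          refine ⟨fun h => by linarith [h.2.1], fun h => ⟨hz₀, by linarith, ?_⟩⟩
          have h1 : t ^ 2 * (z ^ 2 + ‖w‖ ^ 2) ≤ t ^ 2 * 1 := by gcongr; linarith
          have h2 : t ^ 2 ≤ z ^ 2 := by gcongr; linarith
          linarith
        rw [hset, EuclideanSpace.volume_ball_fin_two,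
          ← ENNReal.ofReal_pow (Real.sqrt_nonneg _), Real.sq_sqrt hz2,
          ← ENNReal.ofReal_mul hz2]
        simp [hg, hzt, mul_comm]
    · rw [indicator_of_notMem hz]
      convert measure_empty (μ := volume)
      ext w
      simp only [mem_preimage, mem_empty_iff_false, iff_false]
      rintro ⟨h0, h1, -⟩
      dsimp only at h0 h1
      exact absurd ⟨h0, by nlinarith [sq_nonneg ‖w‖]⟩ hz
  have hg₁ : EqOn g (fun z => Real.pi * (k * z ^ 2)) (uIcc 0 t) := by
    intro z hz
    rw [uIcc_of_le ht₀.le] at hz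
    simp [hg, hz.2]
  have hg₂ : EqOn g (fun z => Real.pi * (1 - z ^ 2)) (uIoc t 1) := by
    intro z hz
    rw [uIoc_of_le ht₁.le] at hz
    simp [hg, hz.1]
  have hi₁ : IntervalIntegrable g volume 0 t :=
    (Continuous.intervalIntegrable (by fun_prop) _ _).congr
      (fun z hz => (hg₁ (uIoc_subset_uIcc hz)).symm)
  have hi₂ : IntervalIntegrable g volume t 1 :=
    (Continuous.intervalIntegrable (by fun_prop) _ _).congr (fun z hz => (hg₂ hz).symm)
  have hval : ∫ z in (0 : ℝ)..1, g z = 2 * Real.pi / 3 * (1 - t) := by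
    rw [← intervalIntegral.integral_add_adjacent_intervals hi₁ hi₂,
      intervalIntegral.integral_congr hg₁,
      intervalIntegral.integral_congr_ae (Filter.Eventually.of_forall hg₂)]
    simp only [intervalIntegral.integral_const_mul]
    rw [intervalIntegral.integral_sub (by simp) (by simp)]
    simp only [integral_pow, intervalIntegral.integral_const, smul_eq_mul]
    rw [hk]
    field_simp
    ring
  rw [Measure.volume_eq_prod, Measure.prod_apply (measurableSet_sphericalSector t),
    lintegral_congr hslice, lintegral_indicator measurableSet_Ioc, ← hval,
    intervalIntegral.integral_of_le zero_le_one, ofReal_integral_eq_lintegral_ofReal (hi₁.trans hi₂).1]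
  filter_upwards [ae_restrict_mem measurableSet_Ioc] with z hz
  have : z ^ 2 ≤ 1 := by nlinarith [hz.1, hz.2]
  have : 0 ≤ 1 - z ^ 2 := by linarith
  simp only [hg, Pi.zero_apply]
  split_ifs <;> positivity

/-- A unit vector of `ℝ³` can be rotated onto the axis of `ℝ × ℝ²`. -/
lemma exists_linearIsometryEquiv_prod {a : EuclideanSpace ℝ (Fin 3)} (ha : ‖a‖ = 1) :
    ∃ φ : EuclideanSpace ℝ (Fin 3) ≃ₗᵢ[ℝ] WithLp 2 (ℝ × EuclideanSpace ℝ (Fin 2)),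
      ∀ x, (φ x).fst = ⟪a, x⟫ := by
  have hdim : Module.finrank ℝ (EuclideanSpace ℝ (Fin 3)) =
      Module.finrank ℝ (WithLp 2 (ℝ × EuclideanSpace ℝ (Fin 2))) := by
    rw [(WithLp.linearEquiv 2 ℝ (ℝ × EuclideanSpace ℝ (Fin 2))).finrank_eq]
    simp
  let ψ : EuclideanSpace ℝ (Fin 3) ≃ₗᵢ[ℝ] WithLp 2 (ℝ × EuclideanSpace ℝ (Fin 2)) :=
    (stdOrthonormalBasis ℝ _).equiv (stdOrthonormalBasis ℝ _) (finCongr hdim)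
  let e : WithLp 2 (ℝ × EuclideanSpace ℝ (Fin 2)) := WithLp.toLp 2 (1, 0)
  have he : ‖ψ a‖ = ‖e‖ := by
    rw [ψ.norm_map, ha, WithLp.prod_norm_eq_of_L2]
    simp [e]
  let φ := ψ.trans (ℝ ∙ (ψ a - e))ᗮ.reflection
  have hφ : φ a = e := Submodule.reflection_sub he
  refine ⟨φ, fun x => ?_⟩
  rw [← φ.inner_map_map, hφ, WithLp.prod_inner_apply]
  simp [e]

instance : IsFiniteMeasure sphereMeasure :=
  inferInstanceAs (IsFiniteMeasure (Measure.toSphere volume))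

lemma sphereMeasure_real_univ : sphereMeasure.real Set.univ = 4 * Real.pi := by
  rw [sphereMeasure, Measure.toSphere_real_apply_univ, measureReal_def,
    EuclideanSpace.volume_ball_fin_three]
  simp [ENNReal.toReal_ofReal (show 0 ≤ Real.pi * 4 / 3 by positivity)]
  ring

open scoped Pointwise in
/-- Archimedes' hat-box theorem: the area of a spherical cap is proportional to its height. -/
lemma sphereMeasure_real_cap {a : EuclideanSpace ℝ (Fin 3)} (ha : ‖a‖ = 1) {t : ℝ}
    (ht₀ : 0 < t) (ht₁ : t < 1) :
    sphereMeasure.real {l : Sphere2 | t ≤ ⟪a, (l : EuclideanSpace ℝ (Fin 3))⟫} =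
      2 * Real.pi * (1 - t) := by
  obtain ⟨φ, hφ⟩ := exists_linearIsometryEquiv_prod ha
  have hmp : MeasurePreserving (fun x => WithLp.ofLp (φ x)) volume volume :=
    (WithLp.volume_preserving_ofLp ℝ (EuclideanSpace ℝ (Fin 2))).comp φ.measurePreserving
  have hnorm : ∀ x, (φ x).fst ^ 2 + ‖(φ x).snd‖ ^ 2 = ‖x‖ ^ 2 := by
    intro x
    rw [← φ.norm_map x, WithLp.prod_norm_sq_eq_of_L2]
    simp
  have hcap : MeasurableSet {l : Sphere2 | t ≤ ⟪a, (l : EuclideanSpace ℝ (Fin 3))⟫} :=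
    measurableSet_le measurable_const (by fun_prop)
  have hset : Set.Ioo (0 : ℝ) 1 • (Subtype.val ''
      {l : Sphere2 | t ≤ ⟪a, (l : EuclideanSpace ℝ (Fin 3))⟫}) =
      (fun x => WithLp.ofLp (φ x)) ⁻¹' sphericalSector t := by
    ext x
    have hmem : x ∈ (fun x => WithLp.ofLp (φ x)) ⁻¹' sphericalSector t ↔
        0 < ⟪a, x⟫ ∧ ‖x‖ ^ 2 < 1 ∧ t ^ 2 * ‖x‖ ^ 2 ≤ ⟪a, x⟫ ^ 2 := by
      rw [← hnorm x, ← hφ x]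
      rfl
    rw [hmem, Set.mem_smul]
    constructor
    · rintro ⟨r, ⟨hr₀, hr₁⟩, _, ⟨l, hl, rfl⟩, rfl⟩
      have hl1 : ‖(l : EuclideanSpace ℝ (Fin 3))‖ = 1 := norm_eq_of_mem_sphere l
      have hl' : t ≤ ⟪a, (l : EuclideanSpace ℝ (Fin 3))⟫ := hl
      rw [inner_smul_right, norm_smul, hl1, Real.norm_of_nonneg hr₀.le]
      refine ⟨mul_pos hr₀ (ht₀.trans_le hl'), by nlinarith, ?_⟩
      rw [mul_one, mul_pow, mul_comm]
      gcongr
    · rintro ⟨h₀, h₁, h₂⟩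
      have hx : 0 < ‖x‖ := norm_pos_iff.2 (by rintro rfl; simp at h₀)
      refine ⟨‖x‖, ⟨hx, by nlinarith⟩, ‖x‖⁻¹ • x, ⟨⟨‖x‖⁻¹ • x, ?_⟩, ?_, rfl⟩, ?_⟩
      · simp [norm_smul, hx.ne']
      · change t ≤ ⟪a, ‖x‖⁻¹ • x⟫
        rw [inner_smul_right, inv_mul_eq_div, le_div_iff₀ hx]
        rw [← mul_pow] at h₂
        exact le_of_sq_le_sq h₂ h₀.le
      · exact smul_inv_smul₀ hx.ne' x
  rw [measureReal_def, sphereMeasure, Measure.toSphere_apply' _ hcap, hset,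
    hmp.measure_preimage (measurableSet_sphericalSector t).nullMeasurableSet,
    volume_sphericalSector ht₀ ht₁]
  have : 0 ≤ 2 * Real.pi / 3 * (1 - t) := mul_nonneg (by positivity) (by linarith)
  simp [ENNReal.toReal_ofReal this]
  ring

open scoped Pointwise in
lemma measurePreserving_sphereMeasure
    (f : EuclideanSpace ℝ (Fin 3) ≃ₗᵢ[ℝ] EuclideanSpace ℝ (Fin 3)) :
    MeasurePreserving (fun l : Sphere2 => (⟨f l, by simp⟩ : Sphere2))
      sphereMeasure sphereMeasure := by
  have hmeas : Measurable (fun l : Sphere2 => (⟨f l, by simp⟩ : Sphere2)) :=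
    Measurable.subtype_mk (by fun_prop)
  refine ⟨hmeas, Measure.ext fun s hs => ?_⟩
  rw [Measure.map_apply hmeas hs, sphereMeasure, Measure.toSphere_apply' _ (hmeas hs),
    Measure.toSphere_apply' _ hs]
  have hset : Set.Ioo (0 : ℝ) 1 • (Subtype.val ''
      ((fun l : Sphere2 => (⟨f l, by simp⟩ : Sphere2)) ⁻¹' s)) =
      f ⁻¹' (Set.Ioo (0 : ℝ) 1 • (Subtype.val '' s)) := by
    ext x
    simp only [Set.mem_smul, Set.mem_preimage]
    constructor
    · rintro ⟨r, hr, _, ⟨l, hl, rfl⟩, rfl⟩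
      exact ⟨r, hr, f l, ⟨_, hl, rfl⟩, by simp⟩
    · rintro ⟨r, hr, _, ⟨l, hl, rfl⟩, hx⟩
      refine ⟨r, hr, f.symm l, ⟨⟨f.symm l, by simp⟩, by simpa using hl, rfl⟩, ?_⟩
      rw [← map_smul, hx, f.symm_apply_apply]
  rw [hset]
  congr 1
  exact f.measurePreserving.measure_preimage_emb f.toHomeomorph.measurableEmbedding _

lemma monotone_sgn : Monotone sgn := by
  intro x y hxy
  unfold sgn
  split_ifs <;> linarith

@[fun_prop]
lemma measurable_sgn : Measurable sgn := monotone_sgn.measurable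

lemma abs_sgn (x : ℝ) : |sgn x| = 1 := by
  unfold sgn
  split_ifs <;> simp

lemma integrable_sgn_inner_add (a : EuclideanSpace ℝ (Fin 3)) (x : ℝ) :
    Integrable (fun l : Sphere2 => sgn (⟪a, (l : EuclideanSpace ℝ (Fin 3))⟫ + x))
      sphereMeasure :=
  Integrable.of_bound (Measurable.aestronglyMeasurable (by fun_prop)) 1
    (Filter.Eventually.of_forall fun _ => (abs_sgn _).le)

lemma integral_sgn_inner_add_of_neg {a : EuclideanSpace ℝ (Fin 3)} (ha : ‖a‖ = 1) {x : ℝ}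
    (hx₀ : -1 < x) (hx₁ : x < 0) :
    ∫ l : Sphere2, sgn (⟪a, (l : EuclideanSpace ℝ (Fin 3))⟫ + x) ∂sphereMeasure =
      4 * Real.pi * x := by
  have hcap : MeasurableSet {l : Sphere2 | -x ≤ ⟪a, (l : EuclideanSpace ℝ (Fin 3))⟫} :=
    measurableSet_le measurable_const (by fun_prop)
  have hsgn : ∀ l : Sphere2, sgn (⟪a, (l : EuclideanSpace ℝ (Fin 3))⟫ + x) =
      {l : Sphere2 | -x ≤ ⟪a, (l : EuclideanSpace ℝ (Fin 3))⟫}.indicator (fun _ => (2 : ℝ)) l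
        - 1 := by
    intro l
    unfold sgn
    by_cases h : -x ≤ ⟪a, (l : EuclideanSpace ℝ (Fin 3))⟫
    · rw [if_pos (by linarith), Set.indicator_of_mem (by exact h)]
      norm_num
    · rw [if_neg (by linarith), Set.indicator_of_notMem (by exact h)]
      norm_num
  simp_rw [hsgn]
  rw [integral_sub ((integrable_const _).indicator hcap) (integrable_const _),
    integral_indicator_const _ hcap, integral_const, sphereMeasure_real_univ,
    sphereMeasure_real_cap ha (by linarith) (by linarith)]
  simp only [smul_eq_mul]
  ring

lemma integral_sgn_inner_add_mono (a : EuclideanSpace ℝ (Fin 3)) {x y : ℝ} (hxy : x ≤ y) :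
    ∫ l : Sphere2, sgn (⟪a, (l : EuclideanSpace ℝ (Fin 3))⟫ + x) ∂sphereMeasure ≤
      ∫ l : Sphere2, sgn (⟪a, (l : EuclideanSpace ℝ (Fin 3))⟫ + y) ∂sphereMeasure :=
  integral_mono (integrable_sgn_inner_add a x) (integrable_sgn_inner_add a y)
    fun _ => monotone_sgn (by linarith)

lemma neg_integral_sgn_neg_inner_le (a : EuclideanSpace ℝ (Fin 3)) (x : ℝ) :
    -∫ l : Sphere2, sgn (⟪-a, (l : EuclideanSpace ℝ (Fin 3))⟫ + -x) ∂sphereMeasure ≤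
      ∫ l : Sphere2, sgn (⟪a, (l : EuclideanSpace ℝ (Fin 3))⟫ + x) ∂sphereMeasure := by
  rw [← integral_neg]
  refine integral_mono (integrable_sgn_inner_add (-a) (-x)).neg (integrable_sgn_inner_add a x)
    fun l => ?_
  simp only [inner_neg_left, sgn]
  split_ifs <;> linarith

lemma integral_sgn_inner_add_le_neg (a : EuclideanSpace ℝ (Fin 3)) {x y : ℝ} (hxy : x < y) :
    ∫ l : Sphere2, sgn (⟪a, (l : EuclideanSpace ℝ (Fin 3))⟫ + x) ∂sphereMeasure ≤
      -∫ l : Sphere2, sgn (⟪-a, (l : EuclideanSpace ℝ (Fin 3))⟫ + -y) ∂sphereMeasure := by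
  rw [← integral_neg]
  refine integral_mono (integrable_sgn_inner_add a x) (integrable_sgn_inner_add (-a) (-y)).neg
    fun l => ?_
  simp only [inner_neg_left, sgn]
  split_ifs <;> linarith

lemma abs_integral_sgn_inner_add_le (a : EuclideanSpace ℝ (Fin 3)) (x : ℝ) :
    |∫ l : Sphere2, sgn (⟪a, (l : EuclideanSpace ℝ (Fin 3))⟫ + x) ∂sphereMeasure| ≤
      4 * Real.pi := by
  have h : ∀ᵐ l : Sphere2 ∂sphereMeasure,
      ‖sgn (⟪a, (l : EuclideanSpace ℝ (Fin 3))⟫ + x)‖ ≤ 1 :=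
    Filter.Eventually.of_forall fun _ => (abs_sgn _).le
  refine (norm_integral_le_of_norm_le_const h).trans_eq ?_
  rw [sphereMeasure_real_univ, one_mul]

lemma le_integral_sgn_inner_add {a : EuclideanSpace ℝ (Fin 3)} (ha : ‖a‖ = 1) {x : ℝ}
    (hx₀ : -1 ≤ x) (hx₁ : x ≤ 1) :
    4 * Real.pi * x ≤
      ∫ l : Sphere2, sgn (⟪a, (l : EuclideanSpace ℝ (Fin 3))⟫ + x) ∂sphereMeasure := by
  have hpi := Real.pi_pos
  rcases hx₀.eq_or_lt with rfl | hx₀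
  · linarith [neg_le_of_abs_le (abs_integral_sgn_inner_add_le a (-1))]
  have hoff : ∀ y, -1 < y → y < 1 → y ≠ 0 → 4 * Real.pi * y ≤
      ∫ l : Sphere2, sgn (⟪a, (l : EuclideanSpace ℝ (Fin 3))⟫ + y) ∂sphereMeasure := by
    intro y hy₀ hy₁ hy
    rcases hy.lt_or_gt with hy | hy
    · exact (integral_sgn_inner_add_of_neg ha hy₀ hy).ge
    · have h := neg_integral_sgn_neg_inner_le a y
      rw [integral_sgn_inner_add_of_neg (a := -a) (by rwa [norm_neg]) (by linarith)
        (by linarith)] at h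
      linarith
  by_contra! hlt
  set G := ∫ l : Sphere2, sgn (⟪a, (l : EuclideanSpace ℝ (Fin 3))⟫ + x) ∂sphereMeasure
  have hlt' : G / (4 * Real.pi) < x := by rw [div_lt_iff₀ (by positivity)]; linarith
  obtain ⟨y₁, hy₁, hy₁x⟩ := exists_between (max_lt hlt' hx₀)
  obtain ⟨y₂, hy₂, hy₂x⟩ := exists_between hy₁x
  obtain ⟨y, hy, hyx, hy0⟩ : ∃ y, max (G / (4 * Real.pi)) (-1) < y ∧ y < x ∧ y ≠ 0 := by
    by_cases h : y₁ = 0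
    · exact ⟨y₂, hy₁.trans hy₂, hy₂x, (h ▸ hy₂ : 0 < y₂).ne'⟩
    · exact ⟨y₁, hy₁, hy₁x, h⟩
  have h1 := hoff y ((le_max_right _ _).trans_lt hy) (by linarith) hy0
  have h2 := integral_sgn_inner_add_mono a hyx.le
  have h3 := (le_max_left _ _).trans_lt hy
  rw [div_lt_iff₀ (by positivity)] at h3
  linarith

/-- The average of `sgn (u + x)` over `u` uniform in `[-1, 1]` is `x`, for the height `u` of a
uniform point of the sphere. -/
lemma integral_sgn_inner_add {a : EuclideanSpace ℝ (Fin 3)} (ha : ‖a‖ = 1) {x : ℝ}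
    (hx₀ : -1 ≤ x) (hx₁ : x ≤ 1) :
    ∫ l : Sphere2, sgn (⟪a, (l : EuclideanSpace ℝ (Fin 3))⟫ + x) ∂sphereMeasure =
      4 * Real.pi * x := by
  have hpi := Real.pi_pos
  refine le_antisymm ?_ (le_integral_sgn_inner_add ha hx₀ hx₁)
  rcases hx₁.eq_or_lt with rfl | hx₁
  · linarith [le_of_abs_le (abs_integral_sgn_inner_add_le a 1)]
  by_contra! hlt
  set G := ∫ l : Sphere2, sgn (⟪a, (l : EuclideanSpace ℝ (Fin 3))⟫ + x) ∂sphereMeasure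
  have hlt' : x < G / (4 * Real.pi) := by rw [lt_div_iff₀ (by positivity)]; linarith
  obtain ⟨y, hxy, hy⟩ := exists_between (lt_min hlt' hx₁)
  have hy₁ := hy.trans_le (min_le_right _ _)
  have h1 := le_integral_sgn_inner_add (a := -a) (by rwa [norm_neg]) (x := -y) (by linarith)
    (by linarith)
  have h2 := integral_sgn_inner_add_le_neg a hxy
  have h3 := hy.trans_le (min_le_left _ _)
  rw [lt_div_iff₀ (by positivity)] at h3
  linarith

lemma abs_inner_sphere_le {a : EuclideanSpace ℝ (Fin 3)} (ha : ‖a‖ = 1) (l : Sphere2) :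
    |⟪a, (l : EuclideanSpace ℝ (Fin 3))⟫| ≤ 1 := by
  simpa [ha] using abs_real_inner_le_norm a (l : EuclideanSpace ℝ (Fin 3))

lemma integral_max_inner_zero {b : EuclideanSpace ℝ (Fin 3)} (hb : ‖b‖ = 1) :
    ∫ l : Sphere2, max ⟪b, (l : EuclideanSpace ℝ (Fin 3))⟫ 0 ∂sphereMeasure = Real.pi := by
  have hbound : ∀ l : Sphere2, max ⟪b, (l : EuclideanSpace ℝ (Fin 3))⟫ 0 ≤ 1 :=
    fun l => max_le (le_of_abs_le (abs_inner_sphere_le hb l)) zero_le_one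
  have hint : Integrable (fun l : Sphere2 => max ⟪b, (l : EuclideanSpace ℝ (Fin 3))⟫ 0)
      sphereMeasure := by
    refine Integrable.of_bound (by fun_prop) 1 (Filter.Eventually.of_forall fun l => ?_)
    rw [Real.norm_of_nonneg (le_max_right _ _)]
    exact hbound l
  rw [hint.integral_eq_integral_Ioc_meas_le
    (Filter.Eventually.of_forall fun l => le_max_right _ _) (Filter.Eventually.of_forall hbound),
    integral_Ioc_eq_integral_Ioo]
  have hcongr : ∀ t ∈ Set.Ioo (0 : ℝ) 1, sphereMeasure.real
      {l : Sphere2 | t ≤ max ⟪b, (l : EuclideanSpace ℝ (Fin 3))⟫ 0} =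
      2 * Real.pi * (1 - t) := by
    rintro t ⟨ht₀, ht₁⟩
    rw [← sphereMeasure_real_cap hb ht₀ ht₁]
    simp [ht₀.not_ge]
  rw [setIntegral_congr_fun measurableSet_Ioo hcongr, ← integral_Ioc_eq_integral_Ioo,
    ← intervalIntegral.integral_of_le zero_le_one, intervalIntegral.integral_const_mul,
    intervalIntegral.integral_sub (by simp) (by simp)]
  simp
  ring

lemma integrable_mul_sgn_inner {b : EuclideanSpace ℝ (Fin 3)} {a : EuclideanSpace ℝ (Fin 3)}
    (ha : ‖a‖ = 1) :
    Integrable (fun l : Sphere2 => ⟪a, (l : EuclideanSpace ℝ (Fin 3))⟫ *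
      sgn ⟪b, (l : EuclideanSpace ℝ (Fin 3))⟫) sphereMeasure := by
  refine Integrable.of_bound (by fun_prop) 1 (Filter.Eventually.of_forall fun l => ?_)
  rw [norm_mul, Real.norm_eq_abs, Real.norm_eq_abs, abs_sgn, mul_one]
  exact abs_inner_sphere_le ha l

lemma integral_inner_mul_sgn_inner_self {b : EuclideanSpace ℝ (Fin 3)} (hb : ‖b‖ = 1) :
    ∫ l : Sphere2, ⟪b, (l : EuclideanSpace ℝ (Fin 3))⟫ *
      sgn ⟪b, (l : EuclideanSpace ℝ (Fin 3))⟫ ∂sphereMeasure = 2 * Real.pi := by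
  have hnb : ‖-b‖ = 1 := by rwa [norm_neg]
  have hsplit : ∀ l : Sphere2, ⟪b, (l : EuclideanSpace ℝ (Fin 3))⟫ *
      sgn ⟪b, (l : EuclideanSpace ℝ (Fin 3))⟫ =
      max ⟪b, (l : EuclideanSpace ℝ (Fin 3))⟫ 0 + max ⟪-b, (l : EuclideanSpace ℝ (Fin 3))⟫ 0 := by
    intro l
    rw [inner_neg_left, sgn]
    split_ifs with h
    · rw [max_eq_left h, max_eq_right (by linarith)]; ring
    · rw [max_eq_right (by linarith), max_eq_left (by linarith)]; ring
  have hint : ∀ c : EuclideanSpace ℝ (Fin 3), ‖c‖ = 1 → Integrable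
      (fun l : Sphere2 => max ⟪c, (l : EuclideanSpace ℝ (Fin 3))⟫ 0) sphereMeasure := fun c hc =>
    not_imp_comm.1 integral_undef (by rw [integral_max_inner_zero hc]; exact Real.pi_ne_zero)
  simp_rw [hsplit]
  rw [integral_add (hint b hb) (hint (-b) hnb), integral_max_inner_zero hb,
    integral_max_inner_zero hnb]
  ring

lemma integral_inner_mul_sgn_inner {a b : EuclideanSpace ℝ (Fin 3)} (ha : ‖a‖ = 1)
    (hb : ‖b‖ = 1) :
    ∫ l : Sphere2, ⟪a, (l : EuclideanSpace ℝ (Fin 3))⟫ *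
      sgn ⟪b, (l : EuclideanSpace ℝ (Fin 3))⟫ ∂sphereMeasure = 2 * Real.pi * ⟪a, b⟫ := by
  let f : EuclideanSpace ℝ (Fin 3) ≃ₗᵢ[ℝ] EuclideanSpace ℝ (Fin 3) := (ℝ ∙ b).reflection
  have hf : ∀ x, f x = (2 * ⟪b, x⟫) • b - x := by
    intro x
    rw [mul_smul, ofNat_smul_eq_nsmul ℝ 2]
    simp only [f, Submodule.reflection_apply, Submodule.starProjection_unit_singleton ℝ hb]
  have hmp := measurePreserving_sphereMeasure f
  have hswap : ∫ l : Sphere2, ⟪a, (l : EuclideanSpace ℝ (Fin 3))⟫ *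
      sgn ⟪b, (l : EuclideanSpace ℝ (Fin 3))⟫ ∂sphereMeasure =
      ∫ l : Sphere2, ⟪a, f l⟫ * sgn ⟪b, f l⟫ ∂sphereMeasure := by
    conv_lhs => rw [← hmp.map_eq]
    exact integral_map hmp.aemeasurable (by fun_prop)
  have hexpand : ∀ l : Sphere2, ⟪a, f l⟫ * sgn ⟪b, f l⟫ =
      2 * ⟪a, b⟫ * (⟪b, (l : EuclideanSpace ℝ (Fin 3))⟫ *
        sgn ⟪b, (l : EuclideanSpace ℝ (Fin 3))⟫) -
      ⟪a, (l : EuclideanSpace ℝ (Fin 3))⟫ * sgn ⟪b, (l : EuclideanSpace ℝ (Fin 3))⟫ := by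
    intro l
    have h : ⟪b, f l⟫ = ⟪b, (l : EuclideanSpace ℝ (Fin 3))⟫ := by
      rw [hf, inner_sub_right, inner_smul_right, real_inner_self_eq_norm_sq, hb]
      ring
    rw [h, hf, inner_sub_right, inner_smul_right]
    ring
  simp_rw [hexpand] at hswap
  rw [integral_sub ((integrable_mul_sgn_inner hb).const_mul _) (integrable_mul_sgn_inner ha),
    integral_const_mul, integral_inner_mul_sgn_inner_self hb] at hswap
  linarith

lemma integral_integral_sgn_mul_sgn {a b : EuclideanSpace ℝ (Fin 3)} (ha : ‖a‖ = 1)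
    (hb : ‖b‖ = 1) :
    ∫ l₁ : Sphere2, (∫ l₀ : Sphere2,
      sgn ⟪a, (l₀ : EuclideanSpace ℝ (Fin 3)) + (l₁ : EuclideanSpace ℝ (Fin 3))⟫ *
        sgn ⟪b, (l₀ : EuclideanSpace ℝ (Fin 3))⟫ ∂sphereMeasure) ∂sphereMeasure =
      8 * Real.pi ^ 2 * ⟪a, b⟫ := by
  rw [integral_integral_swap]
  · have hinner : ∀ l₀ : Sphere2, ∫ l₁ : Sphere2,
        sgn ⟪a, (l₀ : EuclideanSpace ℝ (Fin 3)) + (l₁ : EuclideanSpace ℝ (Fin 3))⟫ *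
          sgn ⟪b, (l₀ : EuclideanSpace ℝ (Fin 3))⟫ ∂sphereMeasure =
        4 * Real.pi * (⟪a, (l₀ : EuclideanSpace ℝ (Fin 3))⟫ *
          sgn ⟪b, (l₀ : EuclideanSpace ℝ (Fin 3))⟫) := by
      intro l₀
      have h := abs_le.1 (abs_inner_sphere_le ha l₀)
      simp_rw [inner_add_right, add_comm ⟪a, (l₀ : EuclideanSpace ℝ (Fin 3))⟫]
      rw [integral_mul_const, integral_sgn_inner_add ha h.1 h.2, mul_assoc]
    simp_rw [hinner]
    rw [integral_const_mul, integral_inner_mul_sgn_inner ha hb]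
    ring
  · refine Integrable.of_bound (C := 1) ?_ (Filter.Eventually.of_forall fun p => ?_)
    · unfold Function.uncurry
      fun_prop
    · simp [Function.uncurry, abs_sgn]

/-- **Simulation of Werner states.** For unit vectors `a, b`,
`(1/(4π))² ∫∫_{S²×S²} sgn(a·(λ₀+λ₁)) sgn(b·λ₀) dσ(λ₀) dσ(λ₁) = (a·b)/2`.
Consequently the LHV model `A = -sgn(a·(λ₀+λ₁))`, `B = sgn(b·λ₀)` with `λ₀, λ₁`
independent uniform on `S²` has joint expectation `E(AB) = -(a·b)/2`, equal to that
of the Werner state `W = (1/2)|ψ⁻⟩⟨ψ⁻| + (1/2)·𝟙/4`. -/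
theorem werner_state_simulation (a b : EuclideanSpace ℝ (Fin 3))
    (ha : ‖a‖ = 1) (hb : ‖b‖ = 1) :
    (1 / (4 * Real.pi)) ^ 2 *
      ∫ l₁ : Sphere2, (∫ l₀ : Sphere2,
        sgn ⟪a, (l₀ : EuclideanSpace ℝ (Fin 3)) + (l₁ : EuclideanSpace ℝ (Fin 3))⟫ *
          sgn ⟪b, (l₀ : EuclideanSpace ℝ (Fin 3))⟫ ∂sphereMeasure) ∂sphereMeasure
      = ⟪a, b⟫ / 2 ∧
    (1 / (4 * Real.pi)) ^ 2 *
      ∫ l₁ : Sphere2, (∫ l₀ : Sphere2,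
        (-sgn ⟪a, (l₀ : EuclideanSpace ℝ (Fin 3)) + (l₁ : EuclideanSpace ℝ (Fin 3))⟫) *
          sgn ⟪b, (l₀ : EuclideanSpace ℝ (Fin 3))⟫ ∂sphereMeasure) ∂sphereMeasure
      = -(⟪a, b⟫ / 2) := by
  have h := integral_integral_sgn_mul_sgn ha hb
  have hpi := Real.pi_ne_zero
  constructor
  · rw [h]
    field_simp
    ring
  · simp_rw [neg_mul, integral_neg]
    rw [h]
    field_simp
    ring
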